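/- Let p > 3 be a prime. Then ∑_{k=1}^{(p-1)/2} (p/2 - k)/((p+1-2k)(p+2k)) ≡ (1/2)·q_p(2) - (p/4)·q_p(2)^2 - 2p·q_p(2) + (1/6)·p^2·q_p(2)^3 + 4p^2·q_p(2) + p^2·q_p(2)^2 + (7/48)·p^2·B_{p-3} modulo p^3 (as rational numbers). -/

import Mathlib

/-- Two rationals `a` and `b` are congruent modulo `p^r`:
the `p`-adic valuation of `a - b` is at least `r`, i.e. `a - b = c * p^r`
with the denominator of `c` not divisible by `p`. -/
def ratCongr (p r : ℕ) (a b : ℚ) : Prop :=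
  ∃ c : ℚ, a - b = c * (p : ℚ) ^ r ∧ ¬ (p ∣ c.den)

/-- The Fermat quotient `q_p(2) = (2^(p-1) - 1)/p` (an integer for odd primes),
viewed as a rational number. -/
def fermatQ (p : ℕ) : ℚ := ((2 : ℚ) ^ (p - 1) - 1) / p

/-! Put `n = (p - 1) / 2` and `S_j = ∑_{k ≤ n} k^{-j}`. The numbers `1, …, p - 1` split into the
pairs `{k, p - k}` and also into the pairs `{2k, p - 2k}`, where `k ≤ n` in both cases.

Computing `(p - 1)!` in both ways gives `∏ (1 - p / k) = 2^{p-1} ∏ (1 - p / (2k))`. A logarithm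
truncated after the cubic term turns this modulo `p^4` into a linear relation between `S_1`, `S_2`,
`S_3` and the logarithm of `2^{p-1} = 1 + p q_p(2)`. Computing `∑ j^{-2}` in both ways expresses
`S_2` by `S_3` modulo `p^2`, and computing `∑ j^{p-3} ≡ p B_{p-3}` in both ways expresses `S_3` by
`B_{p-3}` modulo `p`. Together these give `S_1` modulo `p^3`.

Partial fractions and the reflection `k ↦ n + 1 - k` write the sum in question as a combination of
`S_1` and `p ∑ 1 / (p + 2k)`, and the latter is `p S_1 / 2` modulo `p^3` because `p ∣ S_2`.
-/

open Finset

/-- The ring of rational numbers whose denominator is prime to `p`. -/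
abbrev pIntegers (p : ℕ) [Fact p.Prime] : Subring ℚ := (Rat.padicValuation p).integer

section Integrality

variable {p : ℕ} [Fact p.Prime]

theorem mem_pIntegers_iff {x : ℚ} : x ∈ pIntegers p ↔ ¬ p ∣ x.den :=
  Rat.padicValuation_le_one_iff

theorem inv_natCast_mem_pIntegers {k : ℕ} (hk : ¬ p ∣ k) : (k : ℚ)⁻¹ ∈ pIntegers p := by
  rw [mem_pIntegers_iff, Rat.inv_natCast_den]
  split_ifs
  · exact (Fact.out : p.Prime).not_dvd_one
  · exact hk

theorem inv_natCast_mem_pIntegers_of_mem_Ico {k : ℕ} (hk : k ∈ Ico 1 p) :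
    (k : ℚ)⁻¹ ∈ pIntegers p := by
  rw [mem_Ico] at hk
  exact inv_natCast_mem_pIntegers (Nat.not_dvd_of_pos_of_lt hk.1 hk.2)

theorem bernoulli'_mem_pIntegers {n : ℕ} (hn : n + 1 < p) : bernoulli' n ∈ pIntegers p := by
  induction n using Nat.strong_induction_on with
  | _ n ih =>
    rw [bernoulli'_def]
    refine sub_mem (one_mem _) (sum_mem fun k hk ↦ ?_)
    rw [mem_range] at hk
    have hinv : ((n - k + 1 : ℕ) : ℚ)⁻¹ ∈ pIntegers p :=
      inv_natCast_mem_pIntegers (Nat.not_dvd_of_pos_of_lt (by omega) (by omega))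
    push_cast [hk.le] at hinv
    exact mul_mem (mul_mem (natCast_mem _ _) hinv) (ih k hk (by omega))

theorem bernoulli_mem_pIntegers {n : ℕ} (hn : n + 1 < p) : bernoulli n ∈ pIntegers p :=
  mul_mem (pow_mem (neg_mem (one_mem _)) n) (bernoulli'_mem_pIntegers hn)

theorem not_dvd_two_pow_mul_three_pow (hp3 : 3 < p) (a b : ℕ) : ¬ p ∣ 2 ^ a * 3 ^ b := by
  have hp : p.Prime := Fact.out
  rw [hp.dvd_mul]
  rintro (h | h)
  · exact Nat.not_dvd_of_pos_of_lt two_pos (by omega) (hp.dvd_of_dvd_pow h)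
  · exact Nat.not_dvd_of_pos_of_lt three_pos hp3 (hp.dvd_of_dvd_pow h)

end Integrality

namespace ratCongr

variable {p r : ℕ} [Fact p.Prime] {a b c d : ℚ}

theorem iff_exists_mem_pIntegers :
    ratCongr p r a b ↔ ∃ c ∈ pIntegers p, a - b = c * (p : ℚ) ^ r := by
  simp only [ratCongr, mem_pIntegers_iff, and_comm]

protected theorem refl (a : ℚ) : ratCongr p r a a :=
  iff_exists_mem_pIntegers.2 ⟨0, zero_mem _, by ring⟩

protected theorem add (hab : ratCongr p r a b) (hcd : ratCongr p r c d) :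
    ratCongr p r (a + c) (b + d) := by
  rw [iff_exists_mem_pIntegers] at *
  obtain ⟨x, hx, hab⟩ := hab
  obtain ⟨y, hy, hcd⟩ := hcd
  exact ⟨x + y, add_mem hx hy, by linear_combination hab + hcd⟩

theorem mul_left (hc : c ∈ pIntegers p) (hab : ratCongr p r a b) :
    ratCongr p r (c * a) (c * b) := by
  rw [iff_exists_mem_pIntegers] at *
  obtain ⟨x, hx, hab⟩ := hab
  exact ⟨c * x, mul_mem hc hx, by linear_combination c * hab⟩

protected theorem symm (hab : ratCongr p r a b) : ratCongr p r b a := by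
  rw [iff_exists_mem_pIntegers] at *
  obtain ⟨x, hx, hab⟩ := hab
  exact ⟨-x, neg_mem hx, by linear_combination -hab⟩

protected theorem trans (hab : ratCongr p r a b) (hbc : ratCongr p r b c) : ratCongr p r a c := by
  rw [iff_exists_mem_pIntegers] at *
  obtain ⟨x, hx, hab⟩ := hab
  obtain ⟨y, hy, hbc⟩ := hbc
  exact ⟨x + y, add_mem hx hy, by linear_combination hab + hbc⟩

protected theorem sub (hab : ratCongr p r a b) (hcd : ratCongr p r c d) :
    ratCongr p r (a - c) (b - d) := by
  rw [iff_exists_mem_pIntegers] at *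
  obtain ⟨x, hx, hab⟩ := hab
  obtain ⟨y, hy, hcd⟩ := hcd
  exact ⟨x - y, sub_mem hx hy, by linear_combination hab - hcd⟩

protected theorem sum {ι : Type*} {s : Finset ι} {f g : ι → ℚ}
    (h : ∀ i ∈ s, ratCongr p r (f i) (g i)) : ratCongr p r (∑ i ∈ s, f i) (∑ i ∈ s, g i) := by
  classical
  induction s using Finset.induction_on with
  | empty => exact .refl 0
  | insert i s hi ih =>
    rw [sum_insert hi, sum_insert hi]
    exact (h i (mem_insert_self i s)).add (ih fun j hj ↦ h j (mem_insert_of_mem hj))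

theorem mul_of_congr_one (ha : ratCongr p r a 1) (hb : ratCongr p r b 1) :
    ratCongr p r (a * b) 1 := by
  rw [iff_exists_mem_pIntegers] at *
  obtain ⟨x, hx, ha⟩ := ha
  obtain ⟨y, hy, hb⟩ := hb
  exact ⟨x + y + x * y * p ^ r, by aesop, by
    linear_combination b * ha + (1 + x * p ^ r) * hb⟩

theorem prod_of_congr_one {ι : Type*} {s : Finset ι} {f : ι → ℚ}
    (h : ∀ i ∈ s, ratCongr p r (f i) 1) : ratCongr p r (∏ i ∈ s, f i) 1 :=
  prod_induction f (ratCongr p r · 1) (fun _ _ ↦ mul_of_congr_one) (.refl 1) h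

theorem natCast_mul_iff : ratCongr p (r + 1) (p * a) (p * b) ↔ ratCongr p r a b := by
  have hp0 : (p : ℚ) ≠ 0 := by exact_mod_cast (Fact.out : p.Prime).ne_zero
  have cancel (x : ℚ) : p * a - p * b = x * p ^ (r + 1) ↔ a - b = x * p ^ r := by
    rw [← mul_sub, pow_succ', mul_left_comm, mul_right_inj' hp0]
  simp only [iff_exists_mem_pIntegers, cancel]

theorem of_natCast_mul_sub_eq {n : ℕ} (hn : ¬ p ∣ n) {x y : ℚ} (hab : ratCongr p r a b)
    (hc : c ∈ pIntegers p) (h : n * (x - y) = a - b + c * (p : ℚ) ^ r) : ratCongr p r x y := by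
  rw [iff_exists_mem_pIntegers] at *
  obtain ⟨z, hz, hab⟩ := hab
  refine ⟨(n : ℚ)⁻¹ * (z + c), mul_mem (inv_natCast_mem_pIntegers hn) (add_mem hz hc), ?_⟩
  have hn0 : (n : ℚ) ≠ 0 := by exact_mod_cast fun h0 : n = 0 ↦ hn (h0 ▸ dvd_zero p)
  rw [mul_assoc, eq_inv_mul_iff_mul_eq₀ hn0]
  linear_combination h + hab

end ratCongr

section TruncatedLogarithm

/-- The cubic Taylor polynomial at `1` of the logarithm. -/
def truncLog (u : ℚ) : ℚ := (u - 1) - (u - 1) ^ 2 / 2 + (u - 1) ^ 3 / 3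

variable {p : ℕ} [Fact p.Prime]

theorem truncLog_mul_congr (hp3 : 3 < p) {u v : ℚ} (hu : ratCongr p 1 u 1)
    (hv : ratCongr p 1 v 1) : ratCongr p 4 (truncLog (u * v)) (truncLog u + truncLog v) := by
  rw [ratCongr.iff_exists_mem_pIntegers] at hu hv
  obtain ⟨x, hx, hu⟩ := hu
  obtain ⟨y, hy, hv⟩ := hv
  obtain rfl : u = 1 + x * p := by linear_combination hu
  obtain rfl : v = 1 + y * p := by linear_combination hv
  refine ratCongr.of_natCast_mul_sub_eq (not_dvd_two_pow_mul_three_pow hp3 1 1) (.refl 0)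
    (c := 6 * (x + y) ^ 2 * x * y - 3 * x ^ 2 * y ^ 2 + 6 * p * (x + y) * x ^ 2 * y ^ 2 +
      2 * p ^ 2 * x ^ 3 * y ^ 3) (by aesop) ?_
  unfold truncLog
  push_cast
  ring

theorem truncLog_prod_congr (hp3 : 3 < p) {ι : Type*} {s : Finset ι} {u : ι → ℚ}
    (hu : ∀ i ∈ s, ratCongr p 1 (u i) 1) :
    ratCongr p 4 (truncLog (∏ i ∈ s, u i)) (∑ i ∈ s, truncLog (u i)) := by
  classical
  induction s using Finset.induction_on with
  | empty => simpa [truncLog] using ratCongr.refl 0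
  | insert i s hi ih =>
    have hus : ∀ j ∈ s, ratCongr p 1 (u j) 1 := fun j hj ↦ hu j (mem_insert_of_mem hj)
    rw [prod_insert hi, sum_insert hi]
    exact (truncLog_mul_congr hp3 (hu i (mem_insert_self i s)) (.prod_of_congr_one hus)).trans
      ((ratCongr.refl _).add (ih hus))

theorem sum_truncLog_one_sub_mul {ι : Type*} (s : Finset ι) (a : ι → ℚ) (x : ℚ) :
    ∑ i ∈ s, truncLog (1 - x * a i) =
      -(x * ∑ i ∈ s, a i + x ^ 2 / 2 * ∑ i ∈ s, a i ^ 2 + x ^ 3 / 3 * ∑ i ∈ s, a i ^ 3) := by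
  rw [mul_sum, mul_sum, mul_sum, ← sum_add_distrib, ← sum_add_distrib, ← sum_neg_distrib]
  refine sum_congr rfl fun i _ ↦ ?_
  unfold truncLog
  ring

theorem one_sub_natCast_mul_congr_one {a : ℚ} (ha : a ∈ pIntegers p) :
    ratCongr p 1 (1 - p * a) 1 :=
  ratCongr.iff_exists_mem_pIntegers.2 ⟨-a, neg_mem ha, by ring⟩

theorem truncLog_prod_one_sub_mul_congr (hp3 : 3 < p) {ι : Type*} {s : Finset ι} {a : ι → ℚ}
    (ha : ∀ i ∈ s, a i ∈ pIntegers p) :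
    ratCongr p 4 (truncLog (∏ i ∈ s, (1 - p * a i)))
      (-(p * ∑ i ∈ s, a i + p ^ 2 / 2 * ∑ i ∈ s, a i ^ 2 + p ^ 3 / 3 * ∑ i ∈ s, a i ^ 3)) := by
  rw [← sum_truncLog_one_sub_mul]
  exact truncLog_prod_congr hp3 fun i hi ↦ one_sub_natCast_mul_congr_one (ha i hi)

end TruncatedLogarithm

section Pairing

variable {M : Type*} [CommMonoid M] {N n : ℕ}

@[to_additive]
theorem prod_Ico_const_sub {m : ℕ} (hmN : m ≤ N) (f : ℕ → M) :
    ∏ k ∈ Ico 1 m, f (N - k) = ∏ k ∈ Ico (N + 1 - m) N, f k :=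
  prod_nbij' (N - ·) (N - ·) (by grind) (by grind) (by grind) (by grind) (by simp)

@[to_additive]
theorem prod_Icc_reflect (f : ℕ → M) (n : ℕ) :
    ∏ k ∈ Icc 1 n, f (n + 1 - k) = ∏ k ∈ Icc 1 n, f k := by
  rw [← Ico_add_one_right_eq_Icc, prod_Ico_const_sub le_rfl, Nat.add_sub_cancel_left]

@[to_additive]
theorem prod_Ico_eq_prod_mul_reflect (hN : N = 2 * n + 1) (f : ℕ → M) :
    ∏ k ∈ Ico 1 N, f k = ∏ k ∈ Icc 1 n, f k * f (N - k) := by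
  rw [prod_mul_distrib, ← Ico_add_one_right_eq_Icc, prod_Ico_const_sub (by omega),
    show N + 1 - (n + 1) = n + 1 by omega, prod_Ico_consecutive f (by omega) (by omega)]

@[to_additive]
theorem prod_Ico_eq_prod_even_mul_odd (f : ℕ → M) (n : ℕ) :
    ∏ k ∈ Ico 1 (2 * n + 1), f k = ∏ k ∈ Icc 1 n, f (2 * k) * f (2 * k - 1) := by
  induction n with
  | zero => simp
  | succ n ih =>
    rw [prod_Icc_succ_top (by omega), ← ih, show 2 * (n + 1) + 1 = 2 * n + 1 + 1 + 1 by ring,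
      prod_Ico_succ_top (by omega), prod_Ico_succ_top (by omega), mul_assoc,
      mul_comm (f (2 * n + 1))]
    rfl

@[to_additive]
theorem prod_Ico_eq_prod_even_mul_reflect (hN : N = 2 * n + 1) (f : ℕ → M) :
    ∏ k ∈ Ico 1 N, f k = ∏ k ∈ Icc 1 n, f (2 * k) * f (N - 2 * k) := by
  subst hN
  rw [prod_Ico_eq_prod_even_mul_odd, prod_mul_distrib, prod_mul_distrib,
    ← prod_Icc_reflect fun k ↦ f (2 * k - 1)]
  congr! 3
  omega

variable {K : Type*} [Field K] [CharZero K]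

theorem prod_one_sub_mul_inv_eq_two_pow_mul (hN : N = 2 * n + 1) :
    ∏ k ∈ Icc 1 n, (1 - N * (k : K)⁻¹) =
      2 ^ (N - 1) * ∏ k ∈ Icc 1 n, (1 - N * ((2 * k : ℕ) : K)⁻¹) := by
  have hk0 : ∀ k ∈ Icc 1 n, (k : K) ≠ 0 := fun k hk ↦ by
    rw [mem_Icc] at hk
    exact_mod_cast (by omega : k ≠ 0)
  have hfour : (2 : K) ^ (N - 1) = ∏ _k ∈ Icc 1 n, (4 : K) := by
    rw [prod_const, Nat.card_Icc, show N - 1 = 2 * n by omega, pow_mul, Nat.add_sub_cancel]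
    norm_num
  have hpair := (prod_Ico_eq_prod_mul_reflect hN (fun k : ℕ ↦ (k : K))).symm.trans
    (prod_Ico_eq_prod_even_mul_reflect hN (fun k : ℕ ↦ (k : K)))
  -- `-k² (1 - N / k) = k (N - k)` and `-k² · 4 (1 - N / (2k)) = 2k (N - 2k)`
  refine mul_left_cancel₀ (prod_ne_zero_iff.2 fun k hk ↦ neg_ne_zero.2 (pow_ne_zero 2 (hk0 k hk)))
    (a := ∏ k ∈ Icc 1 n, -(k : K) ^ 2) ?_
  rw [hfour, ← prod_mul_distrib, ← prod_mul_distrib, ← prod_mul_distrib]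
  refine (prod_congr rfl fun k hk ↦ ?_).trans (hpair.trans (prod_congr rfl fun k hk ↦ ?_))
  all_goals
    have hk0' := hk0 k hk
    rw [mem_Icc] at hk
    rw [Nat.cast_sub (by omega)]
    push_cast
    field_simp
    ring

theorem sum_half_sub_div_mul_eq (hN : N = 2 * n + 1) :
    (2 * N + 1) * ∑ k ∈ Icc 1 n, ((N : K) / 2 - k) / ((N + 1 - 2 * k) * (N + 2 * k)) =
      -(1 / 4) * ∑ k ∈ Icc 1 n, (k : K)⁻¹ + N * ∑ k ∈ Icc 1 n, ((N : K) + 2 * k)⁻¹ := by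
  rw [← sum_Icc_reflect (fun k : ℕ ↦ (k : K)⁻¹) n, mul_sum, mul_sum, mul_sum, ← sum_add_distrib]
  refine sum_congr rfl fun k hk ↦ ?_
  rw [mem_Icc] at hk
  have hcast : 2 * ((n + 1 - k : ℕ) : K) = N + 1 - 2 * k := by
    rw [Nat.cast_sub (by omega), hN]
    push_cast
    ring
  have hreflect0 : ((n + 1 - k : ℕ) : K) ≠ 0 := by exact_mod_cast (by omega : n + 1 - k ≠ 0)
  have hshift0 : (N : K) + 2 * k ≠ 0 := by exact_mod_cast (by omega : N + 2 * k ≠ 0)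
  rw [← hcast]
  field_simp
  linear_combination -8 * N * hcast

end Pairing

section PowerSums

variable {p : ℕ} [Fact p.Prime]

theorem natCast_pow_sub_one_congr {k : ℕ} (hk : ¬ p ∣ k) :
    ratCongr p 1 ((k : ℚ) ^ (p - 1)) 1 := by
  have hcop : IsCoprime (k : ℤ) p :=
    Nat.isCoprime_iff_coprime.2 ((Nat.Prime.coprime_iff_not_dvd Fact.out).2 hk).symm
  obtain ⟨c, hc⟩ := (Int.ModEq.pow_card_sub_one_eq_one Fact.out hcop).symm.dvd
  refine ratCongr.iff_exists_mem_pIntegers.2 ⟨c, intCast_mem _ _, ?_⟩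
  rw [pow_one, mul_comm]
  exact_mod_cast hc

theorem natCast_pow_congr_inv_pow {k i j : ℕ} (hk : k ∈ Ico 1 p) (hij : i + j = p - 1) :
    ratCongr p 1 ((k : ℚ) ^ i) ((k : ℚ)⁻¹ ^ j) := by
  have hinv := inv_natCast_mem_pIntegers_of_mem_Ico hk
  rw [mem_Ico] at hk
  have hk0 : (k : ℚ) ≠ 0 := by exact_mod_cast (by omega : k ≠ 0)
  convert (natCast_pow_sub_one_congr (Nat.not_dvd_of_pos_of_lt hk.1 hk.2)).mul_left
    (pow_mem hinv j) using 1
  · rw [← hij, pow_add, inv_pow]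
    field_simp
  · ring

theorem two_pow_sub_one_eq_one_add_mul_fermatQ : (2 : ℚ) ^ (p - 1) = 1 + p * fermatQ p := by
  have hp0 : (p : ℚ) ≠ 0 := by exact_mod_cast (Fact.out : p.Prime).ne_zero
  rw [fermatQ, mul_div_cancel₀ _ hp0, add_sub_cancel]

theorem fermatQ_mem_pIntegers (hp2 : 2 < p) : fermatQ p ∈ pIntegers p := by
  have hp0 : (p : ℚ) ≠ 0 := by exact_mod_cast (Fact.out : p.Prime).ne_zero
  have hfermat := natCast_pow_sub_one_congr (p := p) (Nat.not_dvd_of_pos_of_lt two_pos hp2)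
  obtain ⟨c, hc, h⟩ := ratCongr.iff_exists_mem_pIntegers.1 hfermat
  rw [pow_one] at h
  rwa [fermatQ, (by exact_mod_cast h : (2 : ℚ) ^ (p - 1) - 1 = c * p), mul_div_cancel_right₀ _ hp0]

theorem sum_range_pow_congr {m : ℕ} (hm : m + 1 < p) :
    ratCongr p 2 (∑ k ∈ range p, (k : ℚ) ^ m) (p * bernoulli m) := by
  have hinv : ((m + 1 : ℕ) : ℚ)⁻¹ ∈ pIntegers p :=
    inv_natCast_mem_pIntegers (Nat.not_dvd_of_pos_of_lt m.succ_pos hm)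
  have hterm : ∀ i ∈ range m,
      ratCongr p 2 (bernoulli i * (m + 1).choose i * (p : ℚ) ^ (m + 1 - i) / (m + 1)) 0 := by
    intro i hi
    rw [mem_range] at hi
    have hB : bernoulli i ∈ pIntegers p := bernoulli_mem_pIntegers (by omega)
    refine ratCongr.iff_exists_mem_pIntegers.2 ⟨bernoulli i * (m + 1).choose i *
      (p : ℚ) ^ (m - 1 - i) * ((m + 1 : ℕ) : ℚ)⁻¹, by aesop, ?_⟩
    rw [show m + 1 - i = m - 1 - i + 2 by omega]
    push_cast
    ring
  rw [sum_range_pow, sum_range_succ, Nat.choose_succ_self_right]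
  convert (ratCongr.sum hterm).add (.refl (p * bernoulli m)) using 1
  · rw [Nat.add_sub_cancel_left]
    field_simp
    push_cast
    ring
  · simp only [sum_const_zero, zero_add]

theorem natCast_sub_pow_succ_congr {j m : ℕ} (hm : Odd m) (hjp : j ≤ p) :
    ratCongr p 2 (((p - j : ℕ) : ℚ) ^ (m + 1))
      ((j : ℚ) ^ (m + 1) - p * ((m + 1) * (j : ℚ) ^ m)) := by
  obtain ⟨c, hc⟩ := Polynomial.powAddExpansion (-(j : ℤ)) (p : ℤ) (m + 1)
  refine ratCongr.iff_exists_mem_pIntegers.2 ⟨c, intCast_mem _ _, ?_⟩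
  rw [hm.add_one.neg_pow, Nat.add_sub_cancel, hm.neg_pow, neg_add_eq_sub] at hc
  qify at hc
  rw [Nat.cast_sub hjp, hc]
  ring

theorem inv_natCast_sub_sq_congr {j : ℕ} (hj : j ∈ Ico 1 p) :
    ratCongr p 2 (((p - j : ℕ) : ℚ)⁻¹ ^ 2) ((j : ℚ)⁻¹ ^ 2 - p * (-2 * (j : ℚ)⁻¹ ^ 3)) := by
  have hinv := inv_natCast_mem_pIntegers_of_mem_Ico hj
  have hinv' : ((p - j : ℕ) : ℚ)⁻¹ ∈ pIntegers p :=
    inv_natCast_mem_pIntegers_of_mem_Ico (by grind)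
  refine ratCongr.iff_exists_mem_pIntegers.2
    ⟨(3 * j - 2 * p) * (j : ℚ)⁻¹ ^ 3 * ((p - j : ℕ) : ℚ)⁻¹ ^ 2,
      mul_mem (mul_mem (by aesop) (pow_mem hinv 3)) (pow_mem hinv' 2), ?_⟩
  rw [mem_Ico] at hj
  have hj0 : (j : ℚ) ≠ 0 := by exact_mod_cast (by omega : j ≠ 0)
  have hpj0 : (p : ℚ) - j ≠ 0 := sub_ne_zero.2 (by exact_mod_cast hj.2.ne')
  push_cast [Nat.cast_sub hj.2.le]
  field_simp
  ring

variable {n r : ℕ} {f g : ℕ → ℚ}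

theorem sum_Ico_congr_sum_half (hn : p = 2 * n + 1)
    (h : ∀ j ∈ Ico 1 p, ratCongr p r (f (p - j)) (f j - p * g j)) :
    ratCongr p r (∑ j ∈ Ico 1 p, f j) (2 * ∑ k ∈ Icc 1 n, f k - p * ∑ k ∈ Icc 1 n, g k) := by
  rw [sum_Ico_eq_sum_add_reflect hn, mul_sum, mul_sum, ← sum_sub_distrib]
  refine ratCongr.sum fun k hk ↦ ?_
  convert (ratCongr.refl (f k)).add (h k (by grind)) using 1
  ring

theorem sum_Ico_congr_sum_half_two_mul (hn : p = 2 * n + 1)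
    (h : ∀ j ∈ Ico 1 p, ratCongr p r (f (p - j)) (f j - p * g j)) :
    ratCongr p r (∑ j ∈ Ico 1 p, f j)
      (2 * ∑ k ∈ Icc 1 n, f (2 * k) - p * ∑ k ∈ Icc 1 n, g (2 * k)) := by
  rw [sum_Ico_eq_sum_even_add_reflect hn, mul_sum, mul_sum, ← sum_sub_distrib]
  refine ratCongr.sum fun k hk ↦ ?_
  convert (ratCongr.refl (f (2 * k))).add (h (2 * k) (by grind)) using 1
  ring

theorem two_pow_sub_one_mul_bernoulli_congr (hn : p = 2 * n + 1) {m : ℕ} (hm : Odd m)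
    (hmp : m + 2 < p) :
    ratCongr p 1 ((2 ^ (m + 1) - 1) * bernoulli (m + 1))
      (-((m + 1) * 2 ^ m * ∑ k ∈ Icc 1 n, (k : ℚ) ^ m)) := by
  have hreflect : ∀ j ∈ Ico 1 p, ratCongr p 2 (((p - j : ℕ) : ℚ) ^ (m + 1))
      ((j : ℚ) ^ (m + 1) - p * ((m + 1) * (j : ℚ) ^ m)) :=
    fun j hj ↦ natCast_sub_pow_succ_congr hm (by grind)
  have hbernoulli : ratCongr p 2 (p * bernoulli (m + 1)) (∑ j ∈ Ico 1 p, (j : ℚ) ^ (m + 1)) := by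
    convert (sum_range_pow_congr hmp).symm using 1
    simp [sum_range_eq_add_Ico _ (Fact.out : p.Prime).pos]
  have hpair := hbernoulli.trans (sum_Ico_congr_sum_half hn hreflect)
  have heven := hbernoulli.trans (sum_Ico_congr_sum_half_two_mul hn hreflect)
  have hpow_mem : (2 : ℚ) ^ (m + 1) ∈ pIntegers p := by aesop
  rw [← ratCongr.natCast_mul_iff]
  convert (hpair.mul_left hpow_mem).sub heven using 1
  · ring
  · simp only [Nat.cast_mul, Nat.cast_ofNat, mul_pow, ← mul_sum]
    ring

end PowerSums

section HalfHarmonicSums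

variable {p n : ℕ} [Fact p.Prime]

theorem sum_inv_cube_congr (hn : p = 2 * n + 1) (hp3 : 3 < p) :
    ratCongr p 1 (∑ k ∈ Icc 1 n, (k : ℚ)⁻¹ ^ 3) (-2 * bernoulli (p - 3)) := by
  have hp1 : p - 4 + 3 = p - 1 := by omega
  have hpow : 8 * (2 : ℚ) ^ (p - 4) = 1 + p * fermatQ p := by
    rw [← two_pow_sub_one_eq_one_add_mul_fermatQ, ← hp1, pow_add]
    ring
  have hcube : ratCongr p 1 (∑ k ∈ Icc 1 n, (k : ℚ) ^ (p - 4)) (∑ k ∈ Icc 1 n, (k : ℚ)⁻¹ ^ 3) :=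
    .sum fun k hk ↦ natCast_pow_congr_inv_pow (by grind) hp1
  have hbernoulli := two_pow_sub_one_mul_bernoulli_congr hn (m := p - 4)
    ⟨n - 2, by omega⟩ (by omega)
  rw [show p - 4 + 1 = p - 3 by omega] at hbernoulli
  have hq := fermatQ_mem_pIntegers (p := p) (by omega)
  have hB : bernoulli (p - 3) ∈ pIntegers p := bernoulli_mem_pIntegers (by omega)
  have hpowSum : ∑ k ∈ Icc 1 n, (k : ℚ) ^ (p - 4) ∈ pIntegers p :=
    sum_mem fun k _ ↦ pow_mem (natCast_mem _ k) _
  generalize ∑ k ∈ Icc 1 n, (k : ℚ) ^ (p - 4) = D at *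
  refine .of_natCast_mul_sub_eq (not_dvd_two_pow_mul_three_pow hp3 0 1)
    ((hbernoulli.symm.mul_left (ofNat_mem _ 8)).add (hcube.symm.mul_left (ofNat_mem _ 3)))
    (c := 2 * fermatQ p * bernoulli (p - 3) + D * (1 + p * fermatQ p - 3 * fermatQ p))
    (by aesop) ?_
  have hpow' : (2 : ℚ) ^ (p - 3) = 2 * 2 ^ (p - 4) := by
    rw [← pow_succ', show p - 4 + 1 = p - 3 by omega]
  rw [hpow', Nat.cast_sub (by omega)]
  push_cast
  linear_combination (2 * bernoulli (p - 3) + D * (p - 3)) * hpow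

theorem sum_inv_sq_congr (hn : p = 2 * n + 1) (hp3 : 3 < p) :
    ratCongr p 2 (∑ k ∈ Icc 1 n, (k : ℚ)⁻¹ ^ 2)
      (-(7 / 6) * p * ∑ k ∈ Icc 1 n, (k : ℚ)⁻¹ ^ 3) := by
  have hpair := sum_Ico_congr_sum_half (f := fun j ↦ (j : ℚ)⁻¹ ^ 2)
    (g := fun j ↦ -2 * (j : ℚ)⁻¹ ^ 3) hn fun j hj ↦ inv_natCast_sub_sq_congr hj
  have heven := sum_Ico_congr_sum_half_two_mul (f := fun j ↦ (j : ℚ)⁻¹ ^ 2)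
    (g := fun j ↦ -2 * (j : ℚ)⁻¹ ^ 3) hn fun j hj ↦ inv_natCast_sub_sq_congr hj
  refine .of_natCast_mul_sub_eq (not_dvd_two_pow_mul_three_pow hp3 1 1)
    ((hpair.symm.trans heven).mul_left (ofNat_mem _ 4)) (zero_mem _) ?_
  simp only [Nat.cast_mul, Nat.cast_ofNat, mul_inv, mul_pow, ← mul_sum]
  ring

theorem fermatQ_sub_sq_add_cube_congr (hn : p = 2 * n + 1) (hp3 : 3 < p) :
    ratCongr p 3 (fermatQ p - p * fermatQ p ^ 2 / 2 + p ^ 2 * fermatQ p ^ 3 / 3)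
      (-(1 / 2 * ∑ k ∈ Icc 1 n, (k : ℚ)⁻¹ + 3 / 8 * p * ∑ k ∈ Icc 1 n, (k : ℚ)⁻¹ ^ 2 +
        7 / 24 * p ^ 2 * ∑ k ∈ Icc 1 n, (k : ℚ)⁻¹ ^ 3)) := by
  have hinv : ∀ k ∈ Icc 1 n, (k : ℚ)⁻¹ ∈ pIntegers p :=
    fun k hk ↦ inv_natCast_mem_pIntegers_of_mem_Ico (by grind)
  have hinv_two : ∀ k ∈ Icc 1 n, ((2 * k : ℕ) : ℚ)⁻¹ ∈ pIntegers p :=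
    fun k hk ↦ inv_natCast_mem_pIntegers_of_mem_Ico (by grind)
  have hpow : ratCongr p 1 ((2 : ℚ) ^ (p - 1)) 1 :=
    natCast_pow_sub_one_congr (Nat.not_dvd_of_pos_of_lt two_pos (by lia : 2 < p))
  have hmul := truncLog_mul_congr hp3 hpow
    (.prod_of_congr_one fun k hk ↦ one_sub_natCast_mul_congr_one (hinv_two k hk))
  rw [← prod_one_sub_mul_inv_eq_two_pow_mul hn] at hmul
  have hlog := (hmul.symm.trans (truncLog_prod_one_sub_mul_congr hp3 hinv)).sub
    (truncLog_prod_one_sub_mul_congr hp3 hinv_two)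
  rw [← ratCongr.natCast_mul_iff]
  convert hlog using 1
  · rw [two_pow_sub_one_eq_one_add_mul_fermatQ, add_sub_cancel_right, truncLog]
    ring
  · simp only [Nat.cast_mul, Nat.cast_ofNat, mul_inv, mul_pow, ← mul_sum]
    ring

theorem sum_inv_congr (hn : p = 2 * n + 1) (hp3 : 3 < p) :
    ratCongr p 3 (∑ k ∈ Icc 1 n, (k : ℚ)⁻¹)
      (-2 * fermatQ p + p * fermatQ p ^ 2 - 2 / 3 * p ^ 2 * fermatQ p ^ 3 -
        7 / 12 * p ^ 2 * bernoulli (p - 3)) := by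
  have hsq := ratCongr.natCast_mul_iff.2 (sum_inv_sq_congr hn hp3)
  have hcube := ratCongr.natCast_mul_iff.2 (ratCongr.natCast_mul_iff.2 (sum_inv_cube_congr hn hp3))
  refine .of_natCast_mul_sub_eq (not_dvd_two_pow_mul_three_pow hp3 3 1)
    ((((fermatQ_sub_sq_add_cube_congr hn hp3).mul_left (ofNat_mem _ 48)).sub
      (hsq.mul_left (ofNat_mem _ 18))).add (hcube.mul_left (ofNat_mem _ 7))) (zero_mem _) ?_
  push_cast
  ring

theorem inv_add_two_mul_congr (hp3 : 3 < p) {k : ℕ} (hk : ¬ p ∣ k) :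
    ratCongr p 2 ((p + 2 * k : ℚ)⁻¹) (1 / 2 * (k : ℚ)⁻¹ - p / 4 * (k : ℚ)⁻¹ ^ 2) := by
  have hp2k : ¬ p ∣ p + 2 * k := by
    rw [Nat.dvd_add_right dvd_rfl, (Fact.out : p.Prime).dvd_mul]
    exact fun h ↦ h.elim (Nat.not_dvd_of_pos_of_lt two_pos (by lia)) hk
  refine .of_natCast_mul_sub_eq (not_dvd_two_pow_mul_three_pow hp3 2 0) (.refl 0)
    (mul_mem (pow_mem (inv_natCast_mem_pIntegers hk) 2) (inv_natCast_mem_pIntegers hp2k)) ?_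
  have hk0 : (k : ℚ) ≠ 0 := by exact_mod_cast fun h0 : k = 0 ↦ hk (h0 ▸ dvd_zero p)
  have hp2k0 : (p : ℚ) + 2 * k ≠ 0 := by positivity
  push_cast
  field_simp
  ring

theorem sum_inv_add_two_mul_congr (hn : p = 2 * n + 1) (hp3 : 3 < p) :
    ratCongr p 2 (∑ k ∈ Icc 1 n, ((p : ℚ) + 2 * k)⁻¹) (1 / 2 * ∑ k ∈ Icc 1 n, (k : ℚ)⁻¹) := by
  have hdvd : ∀ k ∈ Icc 1 n, ¬ p ∣ k := fun k hk ↦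
    Nat.not_dvd_of_pos_of_lt (by grind) (by grind)
  have hcube : ∑ k ∈ Icc 1 n, (k : ℚ)⁻¹ ^ 3 ∈ pIntegers p :=
    sum_mem fun k hk ↦ pow_mem (inv_natCast_mem_pIntegers (hdvd k hk)) 3
  have hsum := ratCongr.sum fun k hk ↦ inv_add_two_mul_congr hp3 (hdvd k hk)
  rw [sum_sub_distrib, ← mul_sum, ← mul_sum] at hsum
  refine .of_natCast_mul_sub_eq (not_dvd_two_pow_mul_three_pow hp3 3 1)
    ((hsum.mul_left (ofNat_mem _ 24)).sub ((sum_inv_sq_congr hn hp3).mul_left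
      (mul_mem (ofNat_mem _ 6) (natCast_mem _ p)))) (mul_mem (ofNat_mem _ 7) hcube) ?_
  push_cast
  ring

theorem sum_half_sub_div_mul_congr (hn : p = 2 * n + 1) (hp3 : 3 < p) :
    ratCongr p 3 (∑ k ∈ Icc 1 n, ((p : ℚ) / 2 - k) / (((p : ℚ) + 1 - 2 * k) * (p + 2 * k)))
      ((-(1 / 4) + p - 2 * p ^ 2) * ∑ k ∈ Icc 1 n, (k : ℚ)⁻¹) := by
  have hunit : ¬ p ∣ 2 * p + 1 := by
    rw [Nat.dvd_add_right (dvd_mul_left p 2)]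
    exact (Fact.out : p.Prime).not_dvd_one
  have hinv : ∑ k ∈ Icc 1 n, (k : ℚ)⁻¹ ∈ pIntegers p :=
    sum_mem fun k hk ↦ inv_natCast_mem_pIntegers_of_mem_Ico (by grind)
  have hshift := ratCongr.natCast_mul_iff.2 (sum_inv_add_two_mul_congr hn hp3)
  refine .of_natCast_mul_sub_eq hunit hshift (mul_mem (ofNat_mem _ 4) hinv) ?_
  push_cast
  linear_combination sum_half_sub_div_mul_eq (K := ℚ) hn

end HalfHarmonicSums

theorem sum_aux_congr (p : ℕ) (hp : p.Prime) (hp3 : 3 < p) :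
    ratCongr p 3
      (∑ k ∈ Finset.Icc 1 ((p - 1) / 2),
        ((p : ℚ) / 2 - k) / (((p : ℚ) + 1 - 2 * k) * ((p : ℚ) + 2 * k)))
      ((1 / 2) * fermatQ p - ((p : ℚ) / 4) * fermatQ p ^ 2 - 2 * p * fermatQ p +
        (1 / 6) * (p : ℚ) ^ 2 * fermatQ p ^ 3 + 4 * (p : ℚ) ^ 2 * fermatQ p +
        (p : ℚ) ^ 2 * fermatQ p ^ 2 + (7 / 48) * (p : ℚ) ^ 2 * bernoulli (p - 3)) := by
  have : Fact p.Prime := ⟨hp⟩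
  obtain ⟨n, hn⟩ := hp.odd_of_ne_two (by omega)
  rw [show (p - 1) / 2 = n by omega]
  have hq : fermatQ p ∈ pIntegers p := fermatQ_mem_pIntegers (by omega)
  have hB : bernoulli (p - 3) ∈ pIntegers p := bernoulli_mem_pIntegers (by omega)
  refine .of_natCast_mul_sub_eq (not_dvd_two_pow_mul_three_pow hp3 4 1)
    (((sum_half_sub_div_mul_congr hn hp3).mul_left (ofNat_mem _ 48)).add
      ((sum_inv_congr hn hp3).mul_left (c := -12 + 48 * p - 96 * p ^ 2) (by aesop)))
    (c := -32 * fermatQ p ^ 3 - 96 * fermatQ p ^ 2 - 28 * bernoulli (p - 3) +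
      p * (64 * fermatQ p ^ 3 + 56 * bernoulli (p - 3))) (by aesop) ?_
  push_cast
  ring
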